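/- Watson's theorem: if Re(2c - a - b + 1) > 0, then the hypergeometric value ₃F₂(a, b, c; (a+b+1)/2, 2c; 1) equals Γ(1/2)Γ(c+1/2)Γ((a+b+1)/2)Γ(c-(a+b-1)/2) / [Γ((a+1)/2)Γ((b+1)/2)Γ(c-(a-1)/2)Γ(c-(b-1)/2)]. -/

import Mathlib

noncomputable def ascPoch (a : ℂ) (k : ℕ) : ℂ := (ascPochhammer ℂ k).eval a

/-!
Write `S c` for the sum on the left-hand side. Telescoping its terms gives a first-order recurrence
relating `S (c + 1)` to `S c`, so that `S c` is a quotient of Gamma functions times the limit of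
`S (c + n)` as `n → ∞`; by dominated convergence that limit is `₂F₁(a, b; (a + b + 1) / 2; 1 / 2)`.
For the special value `c = (a + b + 1) / 2` the parameter `c` cancels against `(a + b + 1) / 2`, and
the remaining series `₂F₁(a, b; a + b + 1; 1)` has partial sums in closed form. Comparing the two
evaluations of `S c` yields Gauss's second summation theorem when `a` and `b` have positive real
part, where no Gamma factor has a pole; a contiguous relation under `a ↦ a + 2` and the symmetry
between `a` and `b` remove this restriction.
-/

section

open Asymptotics Complex Filter Topology

/-! ### Rising factorials -/

lemma ascPoch_zero (s : ℂ) : ascPoch s 0 = 1 := by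
  simp [ascPoch]

lemma ascPoch_succ (s : ℂ) (k : ℕ) : ascPoch s (k + 1) = ascPoch s k * (s + k) :=
  ascPochhammer_succ_eval k s

lemma ascPoch_succ_left (s : ℂ) (k : ℕ) : ascPoch s (k + 1) = s * ascPoch (s + 1) k := by
  simp [ascPoch, ascPochhammer_succ_left]

lemma ascPoch_one (k : ℕ) : ascPoch 1 k = k.factorial :=
  ascPochhammer_eval_one ℂ k

lemma ascPoch_eq_prod_range (s : ℂ) (k : ℕ) : ascPoch s k = ∏ j ∈ Finset.range k, (s + j) := by
  induction k with
  | zero => exact ascPoch_zero s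
  | succ k ih => rw [ascPoch_succ, ih, Finset.prod_range_succ]

lemma add_natCast_ne_zero {s : ℂ} (hs : ∀ k : ℕ, s ≠ -k) (k : ℕ) : s + k ≠ 0 :=
  fun h => hs k (eq_neg_of_add_eq_zero_left h)

lemma add_natCast_ne_neg_natCast {s : ℂ} (hs : ∀ k : ℕ, s ≠ -k) (n k : ℕ) : s + n ≠ -k := by
  have h := add_natCast_ne_zero hs (n + k)
  contrapose! h
  push_cast
  linear_combination h

lemma ascPoch_ne_zero {s : ℂ} (hs : ∀ k : ℕ, s ≠ -k) (k : ℕ) : ascPoch s k ≠ 0 := by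
  rw [ascPoch_eq_prod_range]
  exact Finset.prod_ne_zero_iff.2 fun j _ => add_natCast_ne_zero hs j

lemma ne_neg_natCast_of_re_pos {s : ℂ} (hs : 0 < s.re) (k : ℕ) : s ≠ -k := by
  rintro rfl
  exact hs.not_ge (by simp)

/- When `s` is a pole of `Γ`, both sides vanish by Mathlib's convention `Γ(s) = 0`. -/
lemma tendsto_inv_GammaSeq (s : ℂ) :
    Tendsto (fun n => (GammaSeq s n)⁻¹) atTop (𝓝 (Gamma s)⁻¹) := by
  rcases ne_or_eq (Gamma s) 0 with hs | hs
  · exact (GammaSeq_tendsto_Gamma s).inv₀ hs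
  · obtain ⟨m, rfl⟩ := (Gamma_eq_zero_iff s).1 hs
    rw [hs, inv_zero]
    refine tendsto_const_nhds.congr' ?_
    filter_upwards [eventually_ge_atTop m] with n hn
    rw [GammaSeq, Finset.prod_eq_zero (Finset.mem_range_succ_iff.2 hn) (neg_add_cancel _),
      div_zero, inv_zero]

lemma tendsto_ascPoch_div_cpow_mul_factorial (s : ℂ) :
    Tendsto (fun n : ℕ => ascPoch s n / ((n : ℂ) ^ (s - 1) * n.factorial)) atTop
      (𝓝 (Gamma s)⁻¹) := by
  have hlim := (tendsto_inv_GammaSeq s).mul (tendsto_natCast_div_add_atTop s)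
  rw [mul_one] at hlim
  refine hlim.congr' ?_
  have hne : ∀ᶠ n : ℕ in atTop, (n : ℂ) ≠ -s :=
    tendsto_natCast_atTop_cobounded.eventually_ne_cobounded (-s)
  filter_upwards [eventually_ne_atTop 0, hne] with n hn hns
  have hn' : (n : ℂ) ≠ 0 := Nat.cast_ne_zero.2 hn
  have hns' : (n : ℂ) + s ≠ 0 := fun h => hns (eq_neg_of_add_eq_zero_left h)
  rw [GammaSeq, ← ascPoch_eq_prod_range, ascPoch_succ, cpow_sub _ _ hn', cpow_one, add_comm s]
  field_simp

lemma tendsto_ascPoch_div_ascPoch (s : ℂ) {u : ℂ} (hu : ∀ k : ℕ, u ≠ -k) :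
    Tendsto (fun n : ℕ => ascPoch s n / ascPoch u n / (n : ℂ) ^ (s - u)) atTop
      (𝓝 (Gamma u / Gamma s)) := by
  have hlim := (tendsto_ascPoch_div_cpow_mul_factorial s).div
    (tendsto_ascPoch_div_cpow_mul_factorial u) (inv_ne_zero (Gamma_ne_zero hu))
  rw [inv_div_inv] at hlim
  refine hlim.congr' ?_
  filter_upwards [eventually_ne_atTop 0] with n hn
  have hn' : (n : ℂ) ≠ 0 := Nat.cast_ne_zero.2 hn
  have hu' := ascPoch_ne_zero hu n
  have hfac : (n.factorial : ℂ) ≠ 0 := Nat.cast_ne_zero.2 n.factorial_ne_zero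
  have hpow (w : ℂ) : (n : ℂ) ^ w ≠ 0 := by simp [cpow_eq_zero_iff, hn']
  have hsu : (n : ℂ) ^ (s - 1) = (n : ℂ) ^ (s - u) * (n : ℂ) ^ (u - 1) := by
    rw [← cpow_add _ _ hn', sub_add_sub_cancel]
  simp only [Pi.div_apply, hsu]
  field_simp [hpow]

lemma tendsto_ascPoch_mul_div_mul {s t u v : ℂ} (h : s + t = u + v)
    (hu : ∀ k : ℕ, u ≠ -k) (hv : ∀ k : ℕ, v ≠ -k) :
    Tendsto (fun n => ascPoch s n * ascPoch t n / (ascPoch u n * ascPoch v n)) atTop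
      (𝓝 (Gamma u * Gamma v / (Gamma s * Gamma t))) := by
  have hlim := (tendsto_ascPoch_div_ascPoch s hu).mul (tendsto_ascPoch_div_ascPoch t hv)
  rw [div_mul_div_comm] at hlim
  refine hlim.congr' ?_
  filter_upwards [eventually_ne_atTop 0] with n hn
  have hpow : (n : ℂ) ^ (s - u) * (n : ℂ) ^ (t - v) = 1 := by
    rw [← cpow_add _ _ (Nat.cast_ne_zero.2 hn), show s - u + (t - v) = 0 by linear_combination h,
      cpow_zero]
  rw [div_mul_div_comm, hpow, div_one, div_mul_div_comm]

lemma isBigO_ascPoch_div_ascPoch (s : ℂ) {u : ℂ} (hu : ∀ k : ℕ, u ≠ -k) :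
    (fun n => ascPoch s n / ascPoch u n) =O[atTop] fun n : ℕ => (n : ℝ) ^ (s - u).re := by
  have hpow : (fun n : ℕ => (n : ℂ) ^ (s - u)) =O[atTop] fun n : ℕ => (n : ℝ) ^ (s - u).re :=
    IsBigO.of_norm_eventuallyLE <| by
      filter_upwards [eventually_gt_atTop 0] with n hn
      exact (norm_natCast_cpow_of_pos hn _).le
  refine (((tendsto_ascPoch_div_ascPoch s hu).isBigO_one ℝ).mul hpow).congr' ?_ (by simp)
  filter_upwards [eventually_ne_atTop 0] with n hn
  exact div_mul_cancel₀ _ (by simp [cpow_eq_zero_iff, hn])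

/-! ### Hypergeometric coefficients -/

/-- The `k`-th coefficient of the hypergeometric series `₃F₂(a, b, c; d, e; z)`. -/
noncomputable def threeFTwoCoeff (a b c d e : ℂ) (k : ℕ) : ℂ :=
  ascPoch a k * ascPoch b k * ascPoch c k / (ascPoch d k * ascPoch e k * (k.factorial : ℂ))

lemma threeFTwoCoeff_zero (a b c d e : ℂ) : threeFTwoCoeff a b c d e 0 = 1 := by
  simp [threeFTwoCoeff, ascPoch_zero]

lemma threeFTwoCoeff_succ (a b c d e : ℂ) (k : ℕ) :
    threeFTwoCoeff a b c d e (k + 1) =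
      threeFTwoCoeff a b c d e k *
        ((a + k) * (b + k) * (c + k) / ((d + k) * (e + k) * (k + 1))) := by
  simp only [threeFTwoCoeff, ascPoch_succ, Nat.factorial_succ, Nat.cast_mul, Nat.cast_succ]
  rw [div_mul_div_comm]
  congr 1 <;> ring

lemma isBigO_threeFTwoCoeff (a b c : ℂ) {d e : ℂ} (hd : ∀ k : ℕ, d ≠ -k) (he : ∀ k : ℕ, e ≠ -k) :
    threeFTwoCoeff a b c d e =O[atTop]
      fun n : ℕ => (n : ℝ) ^ (-((d + e - a - b - c).re + 1)) := by
  have h1 : ∀ k : ℕ, (1 : ℂ) ≠ -k := ne_neg_natCast_of_re_pos (by simp)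
  refine (((isBigO_ascPoch_div_ascPoch a hd).mul (isBigO_ascPoch_div_ascPoch b he)).mul
    (isBigO_ascPoch_div_ascPoch c h1)).congr' (.of_forall fun n => ?_) ?_
  · simp only [threeFTwoCoeff, ← ascPoch_one, div_mul_div_comm]
  · filter_upwards [eventually_gt_atTop 0] with n hn
    have hn' : (0 : ℝ) < n := Nat.cast_pos.2 hn
    rw [← Real.rpow_add hn', ← Real.rpow_add hn']
    congr 1
    simp only [add_re, sub_re, one_re]
    ring

lemma summable_threeFTwoCoeff {a b c d e : ℂ} (hd : ∀ k : ℕ, d ≠ -k) (he : ∀ k : ℕ, e ≠ -k)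
    (h : 0 < (d + e - a - b - c).re) : Summable (threeFTwoCoeff a b c d e) :=
  summable_of_isBigO_nat (Real.summable_nat_rpow.2 (by linarith))
    (isBigO_threeFTwoCoeff a b c hd he)

lemma isBigO_add_natCast (x : ℂ) :
    (fun n : ℕ => x + n) =O[atTop] fun n : ℕ => (n : ℝ) := by
  have hx : (fun _ : ℕ => x) =O[atTop] fun n : ℕ => (n : ℝ) :=
    (isLittleO_const_left.2 (.inr (tendsto_norm_atTop_atTop.comp
      tendsto_natCast_atTop_atTop))).isBigO
  exact hx.add (.of_norm_le fun n => (norm_natCast n).le)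

lemma tendsto_add_mul_add_mul_threeFTwoCoeff (x y : ℂ) {a b c d e : ℂ}
    (hd : ∀ k : ℕ, d ≠ -k) (he : ∀ k : ℕ, e ≠ -k) (h : 1 < (d + e - a - b - c).re) :
    Tendsto (fun n : ℕ => (x + n) * (y + n) * threeFTwoCoeff a b c d e n) atTop (𝓝 0) := by
  refine (((isBigO_add_natCast x).mul (isBigO_add_natCast y)).mul
    (isBigO_threeFTwoCoeff a b c hd he)).trans_tendsto ?_
  refine ((tendsto_rpow_neg_atTop (sub_pos.2 h)).comp tendsto_natCast_atTop_atTop).congr' ?_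
  filter_upwards [eventually_gt_atTop 0] with n hn
  have hn' : (0 : ℝ) < n := Nat.cast_pos.2 hn
  rw [Function.comp_apply, ← sq, ← Real.rpow_two, ← Real.rpow_add hn']
  congr 1
  ring

lemma ordinaryHypergeometricCoefficient_eq_ascPoch (a b c : ℂ) (k : ℕ) :
    ordinaryHypergeometricCoefficient a b c k =
      ascPoch a k * ascPoch b k / (ascPoch c k * k.factorial) := by
  simp only [ordinaryHypergeometricCoefficient, ascPoch, div_eq_mul_inv, mul_inv]
  ring

lemma threeFTwoCoeff_eq_mul_div (a b c d e : ℂ) (k : ℕ) :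
    threeFTwoCoeff a b c d e k =
      ordinaryHypergeometricCoefficient a b d k * (ascPoch c k / ascPoch e k) := by
  rw [ordinaryHypergeometricCoefficient_eq_ascPoch, div_mul_div_comm, mul_right_comm (ascPoch d k)]
  rfl

lemma summable_ordinaryHypergeometricCoefficient_mul_pow (a b : ℂ) {c z : ℂ}
    (hc : ∀ k : ℕ, c ≠ -k) (hz : ‖z‖ < 1) :
    Summable fun k => ordinaryHypergeometricCoefficient a b c k * z ^ k := by
  have hradius := radius_regularizedGaussHGFunSeries_ge_one a b c
  have hz' : z ∈ Metric.eball 0 (regularizedGaussHGFunSeries a b c).radius :=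
    mem_eball_zero_iff.2 ((ENNReal.coe_lt_one_iff.2 hz).trans_le hradius)
  have hsum := FormalMultilinearSeries.summable _ hz'
  refine (summable_mul_left_iff (inv_ne_zero (Gamma_ne_zero hc))).1 (hsum.congr fun k => ?_)
  rw [FormalMultilinearSeries.apply_eq_pow_smul_coeff,
    ← Gamma_inv_mul_ordinaryHypergeometricSeries_eq hc, ordinaryHypergeometricSeries,
    FormalMultilinearSeries.coeff_ofScalars, smul_eq_mul]
  ring

lemma hasSum_ordinaryHypergeometric (a b : ℂ) {c z : ℂ} (hc : ∀ k : ℕ, c ≠ -k) (hz : ‖z‖ < 1) :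
    HasSum (fun k => ordinaryHypergeometricCoefficient a b c k * z ^ k) (₂F₁ a b c z) := by
  rw [ordinaryHypergeometric_eq_tsum]
  exact (summable_ordinaryHypergeometricCoefficient_mul_pow a b hc hz).hasSum

/-! ### The recurrence in `c` -/

/-- The left-hand side `₃F₂(a, b, c; (a + b + 1) / 2, 2c; 1)` of Watson's theorem. -/
noncomputable def watsonSum (a b c : ℂ) : ℂ :=
  ∑' k, threeFTwoCoeff a b c ((a + b + 1) / 2) (2 * c) k

lemma two_mul_add_natCast_ne_neg_natCast {c : ℂ} (hc : ∀ k : ℕ, 2 * c ≠ -k) (n k : ℕ) :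
    2 * (c + n) ≠ -k := by
  simpa [mul_add] using add_natCast_ne_neg_natCast hc (2 * n) k

lemma ascPoch_two_mul_succ_mul (c : ℂ) (k : ℕ) :
    ascPoch (2 * c) (k + 1) * (2 * c + k + 1) =
      2 * c * (2 * c + 1) * ascPoch (2 * (c + 1)) k := by
  have hsucc := ascPoch_succ (2 * c) (k + 1)
  rw [ascPoch_succ_left, ascPoch_succ_left, show 2 * c + 1 + 1 = 2 * (c + 1) by ring] at hsucc
  push_cast at hsucc
  linear_combination -hsucc

lemma threeFTwoCoeff_two_mul_succ (a b d : ℂ) {c : ℂ} (hc : ∀ k : ℕ, 2 * c ≠ -k) (k : ℕ) :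
    threeFTwoCoeff a b c d (2 * c) (k + 1) =
      threeFTwoCoeff a b (c + 1) d (2 * (c + 1)) k *
        ((a + k) * (b + k) * (2 * c + k + 1) / (2 * (2 * c + 1) * (d + k) * (k + 1))) := by
  have hc1 : 2 * c + 1 ≠ 0 := by simpa using add_natCast_ne_zero hc 1
  have hden : ascPoch (2 * (c + 1)) k ≠ 0 :=
    ascPoch_ne_zero (by simpa using two_mul_add_natCast_ne_neg_natCast hc 1) k
  have hfrac : c / ascPoch (2 * c) (k + 1) =
      (2 * c + k + 1) / (2 * (2 * c + 1) * ascPoch (2 * (c + 1)) k) := by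
    rw [div_eq_div_iff (ascPoch_ne_zero hc _) (mul_ne_zero (mul_ne_zero two_ne_zero hc1) hden)]
    linear_combination -ascPoch_two_mul_succ_mul c k
  calc threeFTwoCoeff a b c d (2 * c) (k + 1)
    _ = ascPoch a k * ascPoch b k * ascPoch (c + 1) k * ((a + k) * (b + k)) /
          (ascPoch d k * (d + k) * (k + 1) * k.factorial) * (c / ascPoch (2 * c) (k + 1)) := by
      rw [threeFTwoCoeff, ascPoch_succ_left c, ascPoch_succ a, ascPoch_succ b, ascPoch_succ d,
        Nat.factorial_succ, Nat.cast_mul, Nat.cast_succ]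
      simp only [div_eq_mul_inv, mul_inv]
      ring
    _ = _ := by
      rw [hfrac, threeFTwoCoeff]
      simp only [div_eq_mul_inv, mul_inv]
      ring

lemma sum_range_watson_contiguous {a b c d : ℂ} (hab : a + b + 1 = 2 * d)
    (hd : ∀ k : ℕ, d ≠ -k) (hc : ∀ k : ℕ, 2 * c ≠ -k) (n : ℕ) :
    ∑ k ∈ Finset.range (n + 1),
        ((2 * c - a + 1) * (2 * c - b + 1) * threeFTwoCoeff a b (c + 1) d (2 * (c + 1)) k -
          (2 * c + 1) * (2 * c - a - b + 1) * threeFTwoCoeff a b c d (2 * c) k) =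
      (a + n) * (b + n) * threeFTwoCoeff a b (c + 1) d (2 * (c + 1)) n := by
  induction n with
  | zero =>
    simp only [zero_add, Finset.sum_range_one, threeFTwoCoeff_zero]
    push_cast
    ring
  | succ n ih =>
    have hdn := add_natCast_ne_zero hd n
    have hc1 : 2 * c + 1 ≠ 0 := by simpa using add_natCast_ne_zero hc 1
    have hcn : 2 * (c + 1) + n ≠ 0 := by
      simpa using add_natCast_ne_zero (two_mul_add_natCast_ne_neg_natCast hc 1) n
    have hn : (n : ℂ) + 1 ≠ 0 := Nat.cast_add_one_ne_zero n
    rw [Finset.sum_range_succ, ih, threeFTwoCoeff_two_mul_succ a b _ hc, threeFTwoCoeff_succ]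
    generalize threeFTwoCoeff a b (c + 1) d (2 * (c + 1)) n = V
    push_cast
    obtain rfl : b = 2 * d - a - 1 := by linear_combination hab
    field_simp
    ring

lemma two_mul_add_natCast_sub_sub_add_one_re_pos {a b c : ℂ} (hre : 0 < (2 * c - a - b + 1).re)
    (n : ℕ) : 0 < (2 * (c + n) - a - b + 1).re := by
  have hshift : 2 * (c + n) - a - b + 1 = 2 * c - a - b + 1 + (2 * n : ℕ) := by
    push_cast
    ring
  rw [hshift, add_re, natCast_re]
  positivity

lemma summable_watson {a b c : ℂ} (hd : ∀ k : ℕ, (a + b + 1) / 2 ≠ -k)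
    (hc : ∀ k : ℕ, 2 * c ≠ -k) (hre : 0 < (2 * c - a - b + 1).re) :
    Summable (threeFTwoCoeff a b c ((a + b + 1) / 2) (2 * c)) := by
  refine summable_threeFTwoCoeff hd hc ?_
  rw [show (a + b + 1) / 2 + 2 * c - a - b - c = (2 * c - a - b + 1) / 2 by ring, div_ofNat_re]
  positivity

lemma watsonSum_succ {a b c : ℂ} (hd : ∀ k : ℕ, (a + b + 1) / 2 ≠ -k)
    (hc : ∀ k : ℕ, 2 * c ≠ -k) (hre : 0 < (2 * c - a - b + 1).re) :
    (2 * c - a + 1) * (2 * c - b + 1) * watsonSum a b (c + 1) =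
      (2 * c + 1) * (2 * c - a - b + 1) * watsonSum a b c := by
  have hc' : ∀ k : ℕ, 2 * (c + 1) ≠ -k := by
    simpa using two_mul_add_natCast_ne_neg_natCast hc 1
  have hre' : 0 < (2 * (c + 1) - a - b + 1).re := by
    simpa using two_mul_add_natCast_sub_sub_add_one_re_pos hre 1
  have hsum := ((summable_watson hd hc' hre').hasSum.mul_left
    ((2 * c - a + 1) * (2 * c - b + 1))).sub
    ((summable_watson hd hc hre).hasSum.mul_left ((2 * c + 1) * (2 * c - a - b + 1)))
  have hlim : Tendsto (fun n : ℕ => (a + n) * (b + n) *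
      threeFTwoCoeff a b (c + 1) ((a + b + 1) / 2) (2 * (c + 1)) n) atTop (𝓝 0) := by
    refine tendsto_add_mul_add_mul_threeFTwoCoeff a b hd hc' ?_
    have hexp : (a + b + 1) / 2 + 2 * (c + 1) - a - b - (c + 1) =
        (2 * c - a - b + 1) / 2 + 1 := by ring
    rw [hexp, add_re, div_ofNat_re, one_re]
    linarith
  refine sub_eq_zero.1 (tendsto_nhds_unique
    (hsum.tendsto_sum_nat.comp (tendsto_add_atTop_nat 1)) (hlim.congr fun n => ?_))
  exact (sum_range_watson_contiguous (by ring) hd hc n).symm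

lemma ascPoch_mul_watsonSum_add_natCast {a b c : ℂ} (hd : ∀ k : ℕ, (a + b + 1) / 2 ≠ -k)
    (hc : ∀ k : ℕ, 2 * c ≠ -k) (hre : 0 < (2 * c - a - b + 1).re) (n : ℕ) :
    ascPoch (c - (a - 1) / 2) n * ascPoch (c - (b - 1) / 2) n * watsonSum a b (c + n) =
      ascPoch (c + 1 / 2) n * ascPoch (c - (a + b - 1) / 2) n * watsonSum a b c := by
  induction n with
  | zero => simp [ascPoch_zero]
  | succ n ih =>
    have hsucc := watsonSum_succ hd (two_mul_add_natCast_ne_neg_natCast hc n)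
      (two_mul_add_natCast_sub_sub_add_one_re_pos hre n)
    simp only [ascPoch_succ, Nat.cast_succ, ← add_assoc]
    linear_combination (c + 1 / 2 + n) * (c - (a + b - 1) / 2 + n) * ih +
      ascPoch (c - (a - 1) / 2) n * ascPoch (c - (b - 1) / 2) n / 4 * hsucc

/-! ### The limit as `c → ∞` -/

lemma add_div_two_mul_add {c j : ℂ} (h : 2 * c + j ≠ 0) :
    (c + j) / (2 * c + j) = 1 / 2 + j / 2 * (2 * c + j)⁻¹ := by
  rw [div_eq_iff h, add_mul, mul_assoc, inv_mul_cancel₀ h]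
  ring

lemma norm_add_natCast_div_two_mul_add_natCast_le {c : ℂ} {x : ℝ} (hx : 0 < x) (hxc : x ≤ c.re)
    (j : ℕ) : ‖(c + j) / (2 * c + j)‖ ≤ ‖((x : ℂ) + j) / (2 * x + j)‖ := by
  have hcj : 2 * c + j ≠ 0 :=
    add_natCast_ne_zero (ne_neg_natCast_of_re_pos (by simpa using hx.trans_le hxc)) j
  have hnorm : 2 * x + j ≤ ‖2 * c + j‖ :=
    calc 2 * x + j ≤ (2 * c + j).re := by simpa using hxc
      _ ≤ ‖2 * c + j‖ := re_le_norm _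
  calc ‖(c + j) / (2 * c + j)‖ ≤ ‖(1 / 2 : ℂ)‖ + ‖(j / 2 * (2 * c + j)⁻¹ : ℂ)‖ := by
        rw [add_div_two_mul_add hcj]
        exact norm_add_le _ _
    _ = 1 / 2 + j / 2 * ‖2 * c + j‖⁻¹ := by simp
    _ ≤ 1 / 2 + j / 2 * (2 * x + j)⁻¹ := by gcongr
    _ = (x + j) / (2 * x + j) := by
        field_simp
        ring
    _ = ‖((x : ℂ) + j) / (2 * x + j)‖ := by
        rw [← Real.norm_of_nonneg (show 0 ≤ (x + j) / (2 * x + j) by positivity), ← norm_real]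
        push_cast
        rfl

lemma ascPoch_div_ascPoch_eq_prod_range (s t : ℂ) (k : ℕ) :
    ascPoch s k / ascPoch t k = ∏ j ∈ Finset.range k, (s + j) / (t + j) := by
  rw [ascPoch_eq_prod_range, ascPoch_eq_prod_range, Finset.prod_div_distrib]

lemma norm_threeFTwoCoeff_two_mul_le (a b d : ℂ) {c : ℂ} {x : ℝ} (hx : 0 < x) (hxc : x ≤ c.re)
    (k : ℕ) : ‖threeFTwoCoeff a b c d (2 * c) k‖ ≤ ‖threeFTwoCoeff a b x d (2 * x) k‖ := by
  simp only [threeFTwoCoeff_eq_mul_div, norm_mul, ascPoch_div_ascPoch_eq_prod_range, norm_prod]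
  gcongr with j
  exact norm_add_natCast_div_two_mul_add_natCast_le hx hxc j

lemma tendsto_two_mul_add_comap_re_atTop (j : ℂ) :
    Tendsto (fun c : ℂ => 2 * c + j) (comap re atTop) (Bornology.cobounded ℂ) := by
  refine tendsto_norm_atTop_iff_cobounded.1 (tendsto_atTop_mono (fun c => re_le_norm _) ?_)
  simpa using tendsto_atTop_add_const_right _ j.re (tendsto_comap.const_mul_atTop two_pos)

lemma tendsto_add_div_two_mul_add (j : ℂ) :
    Tendsto (fun c => (c + j) / (2 * c + j)) (comap re atTop) (𝓝 (1 / 2)) := by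
  have hlim := tendsto_two_mul_add_comap_re_atTop j
  have hmain := ((tendsto_inv₀_cobounded.comp hlim).const_mul (j / 2)).const_add (1 / 2)
  rw [mul_zero, add_zero] at hmain
  refine hmain.congr' ?_
  filter_upwards [hlim.eventually_ne_cobounded 0] with c hc
  exact (add_div_two_mul_add hc).symm

lemma tendsto_ascPoch_div_ascPoch_two_mul (k : ℕ) :
    Tendsto (fun c => ascPoch c k / ascPoch (2 * c) k) (comap re atTop) (𝓝 ((1 / 2) ^ k)) := by
  simp only [ascPoch_div_ascPoch_eq_prod_range]
  simpa using tendsto_finsetProd (Finset.range k) fun j _ => tendsto_add_div_two_mul_add (j : ℂ)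

lemma tendsto_tsum_threeFTwoCoeff_two_mul (a b : ℂ) {d : ℂ} (hd : ∀ k : ℕ, d ≠ -k) :
    Tendsto (fun c => ∑' k, threeFTwoCoeff a b c d (2 * c) k) (comap re atTop)
      (𝓝 (₂F₁ a b d (1 / 2 : ℂ))) := by
  obtain ⟨x, hx⟩ := exists_gt (max 0 (a + b - d).re)
  obtain ⟨hx0, hxabd⟩ := max_lt_iff.1 hx
  have hsum : Summable (threeFTwoCoeff a b x d (2 * x)) := by
    refine summable_threeFTwoCoeff hd (ne_neg_natCast_of_re_pos (by simpa using hx0)) ?_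
    have : d + 2 * x - a - b - x = x - (a + b - d) := by ring
    rw [this, sub_re, ofReal_re]
    linarith
  rw [ordinaryHypergeometric_eq_tsum]
  refine tendsto_tsum_of_dominated_convergence hsum.norm (fun k => ?_) ?_
  · simp only [threeFTwoCoeff_eq_mul_div]
    exact (tendsto_ascPoch_div_ascPoch_two_mul k).const_mul _
  · filter_upwards [tendsto_comap.eventually_ge_atTop x] with c hc
    exact norm_threeFTwoCoeff_two_mul_le a b d hx0 hc

lemma watsonSum_eq_ordinaryHypergeometric_mul {a b c : ℂ} (hd : ∀ k : ℕ, (a + b + 1) / 2 ≠ -k)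
    (hc : ∀ k : ℕ, 2 * c ≠ -k) (hre : 0 < (2 * c - a - b + 1).re) :
    watsonSum a b c = ₂F₁ a b ((a + b + 1) / 2) (1 / 2 : ℂ) *
      (Gamma (c + 1 / 2) * Gamma (c - (a + b - 1) / 2) /
        (Gamma (c - (a - 1) / 2) * Gamma (c - (b - 1) / 2))) := by
  have hs (k : ℕ) : c + 1 / 2 ≠ -k := by
    have h := hc (2 * k + 1)
    contrapose! h
    push_cast
    linear_combination 2 * h
  have ht : ∀ k : ℕ, c - (a + b - 1) / 2 ≠ -k := by
    refine ne_neg_natCast_of_re_pos ?_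
    rw [show c - (a + b - 1) / 2 = (2 * c - a - b + 1) / 2 by ring, div_ofNat_re]
    positivity
  have hshift : Tendsto (fun n : ℕ => c + n) atTop (comap re atTop) := by
    refine tendsto_comap_iff.2 ?_
    simpa [Function.comp_def] using
      tendsto_atTop_add_const_left _ c.re (tendsto_natCast_atTop_atTop (R := ℝ))
  have hlim := ((tendsto_tsum_threeFTwoCoeff_two_mul a b hd).comp hshift).mul
    (tendsto_ascPoch_mul_div_mul
      (show c - (a - 1) / 2 + (c - (b - 1) / 2) = c + 1 / 2 + (c - (a + b - 1) / 2) by ring) hs ht)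
  refine tendsto_nhds_unique (tendsto_const_nhds.congr fun n => ?_) hlim
  have hden := mul_ne_zero (ascPoch_ne_zero hs n) (ascPoch_ne_zero ht n)
  rw [Function.comp_apply, ← watsonSum, ← mul_div_assoc, eq_div_iff hden]
  linear_combination -ascPoch_mul_watsonSum_add_natCast hd hc hre n

/-! ### Gauss's second summation theorem -/

lemma sum_range_ordinaryHypergeometricCoefficient {a b : ℂ} (h : ∀ k : ℕ, a + b + 1 ≠ -k) (n : ℕ) :
    ∑ k ∈ Finset.range (n + 1), ordinaryHypergeometricCoefficient a b (a + b + 1) k =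
      ascPoch (a + 1) n * ascPoch (b + 1) n / (ascPoch (a + b + 1) n * ascPoch 1 n) := by
  simp only [ordinaryHypergeometricCoefficient_eq_ascPoch, ← ascPoch_one]
  induction n with
  | zero => simp [ascPoch_zero]
  | succ n ih =>
    have hn := add_natCast_ne_zero h n
    have hpoch := ascPoch_ne_zero h n
    have h1 : ascPoch 1 n ≠ 0 := ascPoch_ne_zero (ne_neg_natCast_of_re_pos (by simp)) n
    have hn1 : 1 + (n : ℂ) ≠ 0 := by
      rw [add_comm]
      exact Nat.cast_add_one_ne_zero n
    rw [Finset.sum_range_succ, ih, ascPoch_succ_left a, ascPoch_succ_left b]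
    simp only [ascPoch_succ]
    field_simp
    ring

lemma watsonSum_self {a b : ℂ} (h : ∀ k : ℕ, a + b + 1 ≠ -k) :
    watsonSum a b ((a + b + 1) / 2) = Gamma (a + b + 1) / (Gamma (a + 1) * Gamma (b + 1)) := by
  have hd (k : ℕ) : (a + b + 1) / 2 ≠ -k := by
    have hk := h (2 * k)
    contrapose! hk
    push_cast
    linear_combination 2 * hk
  have htwo : 2 * ((a + b + 1) / 2) = a + b + 1 := by ring
  have hcoeff : threeFTwoCoeff a b ((a + b + 1) / 2) ((a + b + 1) / 2) (2 * ((a + b + 1) / 2)) =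
      ordinaryHypergeometricCoefficient a b (a + b + 1) := by
    funext k
    rw [htwo, threeFTwoCoeff, ordinaryHypergeometricCoefficient_eq_ascPoch, mul_comm, mul_assoc,
      mul_div_mul_left _ _ (ascPoch_ne_zero hd k)]
  have hsum := (summable_watson hd (htwo ▸ h)
    (by rw [htwo]; ring_nf; norm_num)).hasSum.tendsto_sum_nat.comp (tendsto_add_atTop_nat 1)
  rw [hcoeff] at hsum
  have hlim := tendsto_ascPoch_mul_div_mul (show a + 1 + (b + 1) = a + b + 1 + 1 by ring) h
    (ne_neg_natCast_of_re_pos (by simp : 0 < (1 : ℂ).re))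
  rw [Gamma_one, mul_one] at hlim
  rw [watsonSum, hcoeff]
  exact tendsto_nhds_unique hsum
    (hlim.congr fun n => (sum_range_ordinaryHypergeometricCoefficient h n).symm)

/-- The value of `₂F₁(a, b; (a + b + 1) / 2; 1 / 2)` in Gauss's second summation theorem. -/
noncomputable def gaussSecondValue (a b : ℂ) : ℂ :=
  Gamma (1 / 2) * Gamma ((a + b + 1) / 2) / (Gamma ((a + 1) / 2) * Gamma ((b + 1) / 2))

lemma Gamma_add_one_div_two_mul_Gamma_div_two_add_one (s : ℂ) :
    Gamma ((s + 1) / 2) * Gamma (s / 2 + 1) = Gamma (s + 1) * 2 ^ (-s) * Gamma (1 / 2) := by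
  have h := Gamma_mul_Gamma_add_half ((s + 1) / 2)
  rw [show (s + 1) / 2 + 1 / 2 = s / 2 + 1 by ring, show 2 * ((s + 1) / 2) = s + 1 by ring,
    show 1 - (s + 1) = -s by ring] at h
  have hhalf : Gamma (1 / 2) = (√Real.pi : ℝ) := by
    rw [← Real.Gamma_one_half_eq, ← Gamma_ofReal]
    norm_num
  rw [h, hhalf]

lemma Gamma_div_two_add_one_ne_zero {s : ℂ} (hs : -2 < s.re) : Gamma (s / 2 + 1) ≠ 0 := by
  refine Gamma_ne_zero_of_re_pos ?_
  rw [add_re, div_ofNat_re, one_re]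
  linarith

lemma Gamma_add_one_div_Gamma_div_two_add_one {s : ℂ} (hs : -2 < s.re) :
    Gamma (s + 1) / Gamma (s / 2 + 1) = 2 ^ s * Gamma ((s + 1) / 2) / Gamma (1 / 2) := by
  have hdup := Gamma_add_one_div_two_mul_Gamma_div_two_add_one s
  have hhalf : Gamma (1 / 2) ≠ 0 := Gamma_ne_zero_of_re_pos (by norm_num)
  have hpow : (2 : ℂ) ^ s * 2 ^ (-s) = 1 := by rw [← cpow_add _ _ two_ne_zero]; simp
  rw [div_eq_div_iff (Gamma_div_two_add_one_ne_zero hs) hhalf]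
  linear_combination -2 ^ s * hdup - Gamma (s + 1) * Gamma (1 / 2) * hpow

lemma ordinaryHypergeometric_one_half_of_re_pos {a b : ℂ} (ha : 0 < a.re) (hb : 0 < b.re) :
    ₂F₁ a b ((a + b + 1) / 2) (1 / 2 : ℂ) = gaussSecondValue a b := by
  have hab : ∀ k : ℕ, a + b + 1 ≠ -k :=
    ne_neg_natCast_of_re_pos (by simp only [add_re, one_re]; positivity)
  have hd : ∀ k : ℕ, (a + b + 1) / 2 ≠ -k :=
    ne_neg_natCast_of_re_pos (by simp only [div_ofNat_re, add_re, one_re]; positivity)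
  have htwo : 2 * ((a + b + 1) / 2) = a + b + 1 := by ring
  have hwatson := watsonSum_eq_ordinaryHypergeometric_mul hd (htwo ▸ hab)
    (by rw [htwo]; ring_nf; norm_num)
  rw [watsonSum_self hab, show (a + b + 1) / 2 + 1 / 2 = (a + b) / 2 + 1 by ring,
    show (a + b + 1) / 2 - (a + b - 1) / 2 = 1 by ring,
    show (a + b + 1) / 2 - (a - 1) / 2 = b / 2 + 1 by ring,
    show (a + b + 1) / 2 - (b - 1) / 2 = a / 2 + 1 by ring, Gamma_one, mul_one] at hwatson
  have ha' : -2 < a.re := by linarith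
  have hb' : -2 < b.re := by linarith
  have hab' : -2 < (a + b).re := by rw [add_re]; linarith
  have hne := div_ne_zero (Gamma_div_two_add_one_ne_zero hab')
    (mul_ne_zero (Gamma_div_two_add_one_ne_zero hb') (Gamma_div_two_add_one_ne_zero ha'))
  have hhalf : Gamma (1 / 2) ≠ 0 := Gamma_ne_zero_of_re_pos (by norm_num)
  have hpow (s : ℂ) : (2 : ℂ) ^ s ≠ 0 := by simp [cpow_eq_zero_iff]
  calc ₂F₁ a b ((a + b + 1) / 2) (1 / 2 : ℂ) = _ := eq_div_of_mul_eq hne hwatson.symm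
    _ = Gamma (a + b + 1) / Gamma ((a + b) / 2 + 1) /
        (Gamma (a + 1) / Gamma (a / 2 + 1) * (Gamma (b + 1) / Gamma (b / 2 + 1))) := by ring
    _ = _ := by
      rw [gaussSecondValue, Gamma_add_one_div_Gamma_div_two_add_one ha',
        Gamma_add_one_div_Gamma_div_two_add_one hb', Gamma_add_one_div_Gamma_div_two_add_one hab',
        cpow_add _ _ two_ne_zero]
      field_simp [hpow]

lemma ordinaryHypergeometricCoefficient_succ (a b c : ℂ) (k : ℕ) :
    ordinaryHypergeometricCoefficient a b c (k + 1) =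
      ordinaryHypergeometricCoefficient a b c k * ((a + k) * (b + k) / ((c + k) * (k + 1))) := by
  simp only [ordinaryHypergeometricCoefficient_eq_ascPoch, ascPoch_succ, Nat.factorial_succ,
    Nat.cast_mul, Nat.cast_succ]
  rw [div_mul_div_comm]
  congr 1 <;> ring

lemma ordinaryHypergeometricCoefficient_succ_left (a b c : ℂ) (k : ℕ) :
    ordinaryHypergeometricCoefficient a b c (k + 1) =
      ordinaryHypergeometricCoefficient (a + 1) (b + 1) (c + 1) k * (a * b / (c * (k + 1))) := by
  simp only [ordinaryHypergeometricCoefficient_eq_ascPoch, ascPoch_succ_left, Nat.factorial_succ,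
    Nat.cast_mul, Nat.cast_succ]
  rw [div_mul_div_comm]
  congr 1 <;> ring

lemma add_one_mul_ordinaryHypergeometricCoefficient_succ (a b c : ℂ) (k : ℕ) :
    (a + 1) * ordinaryHypergeometricCoefficient (a + 2) b c (k + 1) =
      ordinaryHypergeometricCoefficient (a + 1) (b + 1) c k *
        (b * (a + 1 + k) * (a + 2 + k) / ((c + k) * (k + 1))) := by
  have hshift : (a + 1) * ascPoch (a + 2) (k + 1) =
      ascPoch (a + 1) k * ((a + 1 + k) * (a + 2 + k)) := by
    have hsucc := ascPoch_succ_left (a + 1) (k + 1)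
    rw [show a + 1 + 1 = a + 2 by ring, ascPoch_succ, ascPoch_succ] at hsucc
    push_cast at hsucc
    linear_combination -hsucc
  simp only [ordinaryHypergeometricCoefficient_eq_ascPoch]
  rw [← mul_div_assoc, ← mul_assoc, hshift, ascPoch_succ_left b, ascPoch_succ c,
    Nat.factorial_succ, Nat.cast_mul, Nat.cast_succ, div_mul_div_comm]
  congr 1 <;> ring

lemma sum_range_gaussSecond_contiguous {a b d : ℂ} (hab : a + b + 1 = 2 * d)
    (hd : ∀ k : ℕ, d ≠ -k) (n : ℕ) :
    ∑ k ∈ Finset.range (n + 1),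
        ((a + b + 1) * (ordinaryHypergeometricCoefficient a b d k * (1 / 2) ^ k) -
          (a + 1) * (ordinaryHypergeometricCoefficient (a + 2) b (d + 1) k * (1 / 2) ^ k)) =
      b * (ordinaryHypergeometricCoefficient (a + 1) (b + 1) (d + 1) n * (1 / 2) ^ n) := by
  induction n with
  | zero => simp [ordinaryHypergeometricCoefficient]
  | succ n ih =>
    have hd0 : d ≠ 0 := by simpa using hd 0
    have hdn : d + 1 + n ≠ 0 := by
      simpa using add_natCast_ne_zero (add_natCast_ne_neg_natCast hd 1) n
    have hn : (n : ℂ) + 1 ≠ 0 := Nat.cast_add_one_ne_zero n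
    rw [Finset.sum_range_succ, ih, ← mul_assoc (a + 1),
      add_one_mul_ordinaryHypergeometricCoefficient_succ,
      ordinaryHypergeometricCoefficient_succ_left a, ordinaryHypergeometricCoefficient_succ (a + 1)]
    obtain rfl : b = 2 * d - a - 1 := by linear_combination hab
    field_simp
    ring

lemma ordinaryHypergeometric_one_half_contiguous {a b d : ℂ} (hab : a + b + 1 = 2 * d)
    (hd : ∀ k : ℕ, d ≠ -k) :
    (a + b + 1) * ₂F₁ a b d (1 / 2 : ℂ) = (a + 1) * ₂F₁ (a + 2) b (d + 1) (1 / 2 : ℂ) := by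
  have hd1 : ∀ k : ℕ, d + 1 ≠ -k := by simpa using add_natCast_ne_neg_natCast hd 1
  have hhalf : ‖(1 / 2 : ℂ)‖ < 1 := by norm_num
  have hsum := ((hasSum_ordinaryHypergeometric a b hd hhalf).mul_left (a + b + 1)).sub
    ((hasSum_ordinaryHypergeometric (a + 2) b hd1 hhalf).mul_left (a + 1))
  have hlim := (summable_ordinaryHypergeometricCoefficient_mul_pow
    (a + 1) (b + 1) hd1 hhalf).tendsto_atTop_zero.const_mul b
  rw [mul_zero] at hlim
  exact sub_eq_zero.1 (tendsto_nhds_unique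
    (hsum.tendsto_sum_nat.comp (tendsto_add_atTop_nat 1))
    (hlim.congr fun n => (sum_range_gaussSecond_contiguous hab hd n).symm))

lemma gaussSecondValue_comm (a b : ℂ) : gaussSecondValue a b = gaussSecondValue b a := by
  simp only [gaussSecondValue, add_comm a b, mul_comm (Gamma ((a + 1) / 2))]

lemma gaussSecondValue_contiguous {a b : ℂ} (h : a + b + 1 ≠ 0) :
    (a + b + 1) * gaussSecondValue a b = (a + 1) * gaussSecondValue (a + 2) b := by
  have hnum := Gamma_add_one ((a + b + 1) / 2) (div_ne_zero h two_ne_zero)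
  have hden := one_div_Gamma_eq_self_mul_one_div_Gamma_add_one ((a + 1) / 2)
  simp only [gaussSecondValue]
  rw [show (a + 2 + b + 1) / 2 = (a + b + 1) / 2 + 1 by ring,
    show (a + 2 + 1) / 2 = (a + 1) / 2 + 1 by ring, hnum]
  simp only [div_eq_mul_inv, mul_inv, one_mul] at hden ⊢
  rw [hden]
  ring

lemma ordinaryHypergeometric_one_half_of_add_two {a b : ℂ} (hd : ∀ k : ℕ, (a + b + 1) / 2 ≠ -k)
    (h : ₂F₁ (a + 2) b ((a + 2 + b + 1) / 2) (1 / 2 : ℂ) = gaussSecondValue (a + 2) b) :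
    ₂F₁ a b ((a + b + 1) / 2) (1 / 2 : ℂ) = gaussSecondValue a b := by
  have hne : a + b + 1 ≠ 0 := fun h0 => hd 0 (by simp [h0])
  refine mul_left_cancel₀ hne ?_
  rw [gaussSecondValue_contiguous hne, ← h, ordinaryHypergeometric_one_half_contiguous (by ring) hd,
    show (a + 2 + b + 1) / 2 = (a + b + 1) / 2 + 1 by ring]

lemma ordinaryHypergeometric_one_half_of_add_two_mul {a b : ℂ} (n : ℕ)
    (hd : ∀ k : ℕ, (a + b + 1) / 2 ≠ -k)
    (h : ₂F₁ (a + 2 * n) b ((a + 2 * n + b + 1) / 2) (1 / 2 : ℂ) =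
      gaussSecondValue (a + 2 * n) b) :
    ₂F₁ a b ((a + b + 1) / 2) (1 / 2 : ℂ) = gaussSecondValue a b := by
  induction n generalizing a with
  | zero => simpa using h
  | succ n ih =>
    have hd2 : ∀ k : ℕ, (a + 2 + b + 1) / 2 ≠ -k := by
      rw [show (a + 2 + b + 1) / 2 = (a + b + 1) / 2 + (1 : ℕ) by push_cast; ring]
      exact add_natCast_ne_neg_natCast hd 1
    refine ordinaryHypergeometric_one_half_of_add_two hd (ih hd2 ?_)
    rwa [show a + 2 + 2 * n = a + 2 * (n + 1 : ℕ) by push_cast; ring]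

lemma ordinaryHypergeometric_comm (a b c z : ℂ) : ₂F₁ a b c z = ₂F₁ b a c z := by
  simp only [ordinaryHypergeometric, ordinaryHypergeometricSeries_symm]

lemma exists_nat_add_two_mul_re_pos (s : ℂ) : ∃ n : ℕ, 0 < (s + 2 * n).re := by
  obtain ⟨n, hn⟩ := exists_nat_gt (-s.re)
  refine ⟨n, ?_⟩
  calc 0 < s.re + n := by linarith
    _ ≤ s.re + 2 * n := by linarith [n.cast_nonneg (α := ℝ)]
    _ = (s + 2 * n).re := by simp

theorem ordinaryHypergeometric_one_half {a b : ℂ} (hd : ∀ k : ℕ, (a + b + 1) / 2 ≠ -k) :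
    ₂F₁ a b ((a + b + 1) / 2) (1 / 2 : ℂ) = gaussSecondValue a b := by
  obtain ⟨n, hn⟩ := exists_nat_add_two_mul_re_pos a
  obtain ⟨m, hm⟩ := exists_nat_add_two_mul_re_pos b
  have hdm : ∀ k : ℕ, (a + (b + 2 * m) + 1) / 2 ≠ -k := by
    rw [show (a + (b + 2 * m) + 1) / 2 = (a + b + 1) / 2 + m by ring]
    exact add_natCast_ne_neg_natCast hd m
  have hright : ₂F₁ a (b + 2 * m) ((a + (b + 2 * m) + 1) / 2) (1 / 2 : ℂ) =
      gaussSecondValue a (b + 2 * m) :=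
    ordinaryHypergeometric_one_half_of_add_two_mul n hdm
      (ordinaryHypergeometric_one_half_of_re_pos hn hm)
  rw [ordinaryHypergeometric_comm, gaussSecondValue_comm, add_comm a] at hright ⊢
  exact ordinaryHypergeometric_one_half_of_add_two_mul m (by rwa [add_comm b]) hright

end

/-- Watson's theorem for the generalized hypergeometric series ₃F₂ at z = 1. -/
theorem stmt8 (a b c : ℂ)
    (hd : ∀ k : ℕ, (a + b + 1) / 2 ≠ -(k : ℂ))
    (he : ∀ k : ℕ, 2 * c ≠ -(k : ℂ))
    (hconv : (2 * c - a - b + 1).re > 0) :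
    (∑' k : ℕ, ascPoch a k * ascPoch b k * ascPoch c k /
        (ascPoch ((a + b + 1) / 2) k * ascPoch (2 * c) k * (k.factorial : ℂ)))
      = Complex.Gamma (1/2) * Complex.Gamma (c + 1/2) * Complex.Gamma ((a + b + 1)/2) *
          Complex.Gamma (c - (a + b - 1)/2) /
        (Complex.Gamma ((a + 1)/2) * Complex.Gamma ((b + 1)/2) *
          Complex.Gamma (c - (a - 1)/2) * Complex.Gamma (c - (b - 1)/2)) := by
  change watsonSum a b c = _
  rw [watsonSum_eq_ordinaryHypergeometric_mul hd he hconv, ordinaryHypergeometric_one_half hd,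
    gaussSecondValue, div_mul_div_comm]
  ring
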